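/- Let (A,m) be a multiarrangement in V = K^ℓ. For every X ∈ L(A), the characteristic polynomial χ((A_X,m_X),t) is divisible by t^{dim X}; equivalently, C_p(X) = 0 whenever ℓ − p < dim X. -/

import Mathlib

/-!
If every hyperplane of `(𝒜, m)` contains `X`, then `t^{dim X}` already divides `ψ(𝒜, m; t, q)`,
before any specialisation of `q`, so all its lower coefficients in `t` are zero power series.

For `ξ ∈ X` and a linear form `y` with `y(ξ) = 1`, two operators act on `⨁ₚ Dᵖ(𝒜, m)`: contraction
`θ ↦ θ(y, ·)` (`contract`) and the wedge product with the constant derivation `∂_ξ` (`wedge`), which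
preserves the condition along each hyperplane because `∂_ξ α_H = 0`. Contraction maps `Dᵖ⁺¹` onto
the elements of `Dᵖ` killed by `y`, since `∂_ξ ∧ θ` is a preimage of such a `θ`, and its kernel is
the set of elements of `Dᵖ⁺¹` killed by `y`. Counting dimensions in each polynomial degree, which
are finite as a multiderivation is determined by its values on the variables, gives
`F(Y) = (1 + Y) F_y(Y)` for the generating polynomial `F(Y) = ∑ₚ H(Dᵖ, q) Yᵖ` and its analogue `F_y`
for the elements killed by `y`.

Iterating over a basis of `X` and dual linear forms yields `(1 + Y)^{dim X} ∣ F(Y)`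
(`one_add_X_pow_dvd_genPoly`), and `ψ = F(t(q - 1) - 1)` while `1 + Y` becomes `t(q - 1)`.
-/

open MvPolynomial

noncomputable section

/-- The linear form (degree-one polynomial) associated to a linear functional on `K^ℓ`. -/
def formPoly {K : Type*} [Field K] {ℓ : ℕ} (φ : Module.Dual K (Fin ℓ → K)) :
    MvPolynomial (Fin ℓ) K :=
  ∑ i : Fin ℓ, MvPolynomial.C (φ (Pi.single i 1)) * MvPolynomial.X i

/-- A multiarrangement of hyperplanes in `K^ℓ`: a finite set of (pairwise distinct)
hyperplanes, recorded by nonzero defining linear functionals with pairwise distinct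
kernels, together with a positive multiplicity attached to each hyperplane. -/
structure MultiArr (K : Type*) [Field K] (ℓ : ℕ) where
  duals : Finset (Module.Dual K (Fin ℓ → K))
  ne_zero : ∀ φ ∈ duals, φ ≠ 0
  distinct_ker : ∀ φ ∈ duals, ∀ ψ ∈ duals, φ ≠ ψ → LinearMap.ker φ ≠ LinearMap.ker ψ
  mult : Module.Dual K (Fin ℓ → K) → ℕ
  mult_pos : ∀ φ ∈ duals, 0 < mult φ

variable {K : Type*} [Field K] {ℓ : ℕ}

/-- `Der^p(S)`-condition: an alternating `p`-multilinear map is a `K`-derivation in each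
variable. -/
def IsMultiDer {p : ℕ}
    (θ : (MvPolynomial (Fin ℓ) K) [⋀^Fin p]→ₗ[K] (MvPolynomial (Fin ℓ) K)) : Prop :=
  ∀ (i : Fin p) (v : Fin p → MvPolynomial (Fin ℓ) K) (f g : MvPolynomial (Fin ℓ) K),
    θ (Function.update v i (f * g)) =
      f * θ (Function.update v i g) + g * θ (Function.update v i f)

/-- The module of `p`-derivations `D^p(𝒜,m)` of a multiarrangement, as a submodule of the
alternating `p`-multilinear maps (for `p = 0` this is all of `S ≅ Der^0(S)`). -/
def Dp (A : MultiArr K ℓ) (p : ℕ) :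
    Submodule (MvPolynomial (Fin ℓ) K)
      ((MvPolynomial (Fin ℓ) K) [⋀^Fin p]→ₗ[K] (MvPolynomial (Fin ℓ) K)) where
  carrier := {θ | IsMultiDer θ ∧ ∀ φ ∈ A.duals, ∀ v : Fin p → MvPolynomial (Fin ℓ) K,
    ∀ i : Fin p, v i = formPoly φ → θ v ∈ Ideal.span {formPoly φ ^ A.mult φ}}
  add_mem' := by
    rintro θ η ⟨hθ, hθ'⟩ ⟨hη, hη'⟩
    refine ⟨fun i v f g => ?_, fun φ hφ v i hv => ?_⟩
    · simp only [AlternatingMap.add_apply, hθ i v f g, hη i v f g]; ring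
    · simpa using add_mem (hθ' φ hφ v i hv) (hη' φ hφ v i hv)
  zero_mem' := by
    refine ⟨fun i v f g => by simp, fun φ hφ v i hv => by simp⟩
  smul_mem' := by
    rintro c θ ⟨hθ, hθ'⟩
    refine ⟨fun i v f g => ?_, fun φ hφ v i hv => ?_⟩
    · simp only [AlternatingMap.smul_apply, smul_eq_mul, hθ i v f g]; ring
    · simpa using Ideal.mul_mem_left _ c (hθ' φ hφ v i hv)

attribute [local instance] Classical.propDecidable

/-- The subarrangement `(𝒜_X, m_X)`, consisting of the hyperplanes of `𝒜` containing `X`,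
with the restricted multiplicity. -/
def restrictArr (A : MultiArr K ℓ) (X : Submodule K (Fin ℓ → K)) : MultiArr K ℓ where
  duals := A.duals.filter (fun φ => X ≤ LinearMap.ker φ)
  ne_zero := fun φ hφ => A.ne_zero φ (Finset.mem_filter.mp hφ).1
  distinct_ker := fun φ hφ ψ hψ =>
    A.distinct_ker φ (Finset.mem_filter.mp hφ).1 ψ (Finset.mem_filter.mp hψ).1
  mult := A.mult
  mult_pos := fun φ hφ => A.mult_pos φ (Finset.mem_filter.mp hφ).1

/-- The intersection lattice `L(𝒜)`: all intersections of subsets of `𝒜`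
(with `V` itself as the empty intersection). -/
def LSet (A : MultiArr K ℓ) : Finset (Submodule K (Fin ℓ → K)) :=
  A.duals.powerset.image fun B => ⨅ φ ∈ B, LinearMap.ker φ

/-- The rank `r(X) = codim_V X` of a subspace `X ⊆ V = K^ℓ`. -/
def rk {K : Type*} [Field K] {ℓ : ℕ} (X : Submodule K (Fin ℓ → K)) : ℕ :=
  ℓ - Module.finrank K X

/-- A `p`-derivation is homogeneous of (polynomial) degree `d` if all the values
`θ(x_{i_1},…,x_{i_p})` are homogeneous polynomials of degree `d`. -/
def AltHomog {p : ℕ}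
    (θ : (MvPolynomial (Fin ℓ) K) [⋀^Fin p]→ₗ[K] (MvPolynomial (Fin ℓ) K)) (d : ℕ) : Prop :=
  ∀ v : Fin p → Fin ℓ, (θ fun j => MvPolynomial.X (v j)).IsHomogeneous d

/-- The degree-`d` graded component of `D^p(𝒜,m)`, as a `K`-subspace. -/
def DpGraded (A : MultiArr K ℓ) (p d : ℕ) :
    Submodule K ((MvPolynomial (Fin ℓ) K) [⋀^Fin p]→ₗ[K] (MvPolynomial (Fin ℓ) K)) where
  carrier := {θ | θ ∈ Dp A p ∧ AltHomog θ d}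
  add_mem' := fun ha hb =>
    ⟨add_mem ha.1 hb.1, fun v => by
      simpa using (ha.2 v).add (hb.2 v)⟩
  zero_mem' := ⟨zero_mem _, fun v => by
    simpa using MvPolynomial.isHomogeneous_zero _ _ d⟩
  smul_mem' := fun c θ hθ => by
    refine ⟨?_, fun v => ?_⟩
    · have : c • θ = (MvPolynomial.C c : MvPolynomial (Fin ℓ) K) • θ := by
        ext v
        simp [MvPolynomial.smul_eq_C_mul]
      rw [this]
      exact Submodule.smul_mem _ _ hθ.1
    · have : (c • θ) (fun j => MvPolynomial.X (v j)) =
        MvPolynomial.C c * θ (fun j => MvPolynomial.X (v j)) := by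
        simp [MvPolynomial.smul_eq_C_mul]
      rw [this]
      simpa using (MvPolynomial.isHomogeneous_C _ c).mul (hθ.2 v)

/-- The Hilbert series `H(D^p(𝒜,m), q) = Σ_d dim_K D^p(𝒜,m)_d qᵈ`. -/
def hilb (A : MultiArr K ℓ) (p : ℕ) : PowerSeries ℤ :=
  PowerSeries.mk fun d => (Module.finrank K (DpGraded A p d) : ℤ)

/-- `ψ(𝒜,m;t,q) = Σ_{p=0}^{ℓ} H(D^p(𝒜,m),q)·(t(q−1)−1)^p`, as a polynomial in `t` with
power-series (in `q`) coefficients. -/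
def psi (A : MultiArr K ℓ) : Polynomial (PowerSeries ℤ) :=
  ∑ p ∈ Finset.range (ℓ + 1), Polynomial.C (hilb A p) *
    (Polynomial.C ((PowerSeries.X : PowerSeries ℤ) - 1) * Polynomial.X - 1) ^ p

/-- The coefficient of `t^k` in `ψ(𝒜,m;t,q)`, expressed as a polynomial in `q`
(this is possible by Theorem `chithm`; junk value `0` otherwise). -/
def psiQCoeff (A : MultiArr K ℓ) (k : ℕ) : Polynomial ℤ :=
  if h : ∃ f : Polynomial ℤ, Polynomial.coeToPowerSeries.ringHom f = (psi A).coeff k then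
    h.choose else 0

/-- The coefficient of `t^k` in `ψ(𝒜,m;t,1)`. -/
def psiAtOne (A : MultiArr K ℓ) (k : ℕ) : ℤ := (psiQCoeff A k).eval 1

/-- `ψ(𝒜,m;t,1)` as a polynomial in `t`. -/
def psiT1Poly (A : MultiArr K ℓ) : Polynomial ℤ :=
  ∑ k ∈ Finset.range (ℓ + 1), Polynomial.C (psiAtOne A k) * Polynomial.X ^ k

/-- The characteristic polynomial `χ((𝒜,m),t) = (−1)^ℓ ψ(𝒜,m;t,1)`. -/
def charPoly (A : MultiArr K ℓ) : Polynomial ℤ := (-1 : ℤ) ^ ℓ • psiT1Poly A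

/-- `C_p`, the coefficient of `t^p` in the Poincaré polynomial
`π((𝒜,m),t) = (−t)^ℓ χ((𝒜,m),−t^{−1})`. -/
def CpCoeff (A : MultiArr K ℓ) (p : ℕ) : ℤ := (-1 : ℤ) ^ (ℓ - p) * psiAtOne A (ℓ - p)

/-- The Poincaré polynomial `π((𝒜,m),t) = (−t)^ℓ χ((𝒜,m),−t^{−1})`. -/
def poinPoly (A : MultiArr K ℓ) : Polynomial ℤ :=
  ∑ p ∈ Finset.range (ℓ + 1), Polynomial.C (CpCoeff A p) * Polynomial.X ^ p

/-! ### Multiderivations and their values on the variables -/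

theorem IsMultiDer.eq_zero {p : ℕ}
    {θ : (MvPolynomial (Fin ℓ) K) [⋀^Fin p]→ₗ[K] (MvPolynomial (Fin ℓ) K)} (hθ : IsMultiDer θ)
    (h : ∀ v : Fin p → Fin ℓ, (θ fun j => MvPolynomial.X (v j)) = 0) : θ = 0 := by
  -- Slots are released one at a time from the requirement of holding a variable.
  have key : ∀ (s : Finset (Fin p)) (v : Fin p → MvPolynomial (Fin ℓ) K),
      (∀ i ∉ s, ∃ a, v i = MvPolynomial.X a) → θ v = 0 := by
    intro s
    induction s using Finset.induction_on with
    | empty =>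
      intro v hv
      choose a ha using fun i => hv i (Finset.notMem_empty i)
      rw [show v = fun j => MvPolynomial.X (a j) from funext ha]
      exact h a
    | insert i s his ih =>
      intro v hv
      let D : Derivation K (MvPolynomial (Fin ℓ) K) (MvPolynomial (Fin ℓ) K) :=
        Derivation.mk' (θ.toMultilinearMap.toLinearMap v i) (fun f g => by
          simpa using hθ i v f g)
      have hD : D = 0 := by
        refine MvPolynomial.derivation_ext fun a => ?_
        change θ (Function.update v i (MvPolynomial.X a)) = 0
        refine ih _ fun j hj => ?_
        by_cases hji : j = i
        · subst hji; exact ⟨a, by simp⟩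
        · rw [Function.update_of_ne hji]
          exact hv j (by simp [hji, hj])
      have h2 : θ (Function.update v i (v i)) = D (v i) := rfl
      rw [Function.update_eq_self, hD] at h2
      simpa using h2
  ext v : 1
  exact key Finset.univ v (by simp)

instance finiteDimensional_DpGraded (A : MultiArr K ℓ) (p d : ℕ) :
    FiniteDimensional K (DpGraded A p d) := by
  have : Module.Finite K (homogeneousSubmodule (Fin ℓ) K d) :=
    Module.Finite.iff_fg.mpr (homogeneousSubmodule_fg _ _ d)
  let L : DpGraded A p d →ₗ[K] ((Fin p → Fin ℓ) → homogeneousSubmodule (Fin ℓ) K d) :=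
    { toFun := fun θ v => ⟨θ.1 fun j => MvPolynomial.X (v j), θ.2.2 v⟩
      map_add' := fun _ _ => rfl
      map_smul' := fun _ _ => rfl }
  refine FiniteDimensional.of_injective L fun θ η hθη => ?_
  refine sub_eq_zero.mp (Subtype.ext ((θ - η).2.1.1.eq_zero fun v => ?_))
  exact sub_eq_zero.mpr (congrArg Subtype.val (congrFun hθη v))

theorem DpGraded_eq_bot (A : MultiArr K ℓ) {p : ℕ} (hp : ℓ < p) (d : ℕ) :
    DpGraded A p d = ⊥ := by
  refine (Submodule.eq_bot_iff _).mpr fun θ hθ => hθ.1.1.eq_zero fun v => ?_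
  obtain ⟨i, j, hij, hv⟩ := Fintype.exists_ne_map_eq_of_card_lt v (by simpa using hp)
  exact θ.map_eq_zero_of_eq _ (by simp [hv]) hij

/-! ### Contraction and exterior product with a constant derivation -/

/-- Contraction `θ ↦ θ(y, ·)` of alternating maps with the linear form `y`. -/
def contract (y : Module.Dual K (Fin ℓ → K)) (p : ℕ) :
    ((MvPolynomial (Fin ℓ) K) [⋀^Fin (p + 1)]→ₗ[K] (MvPolynomial (Fin ℓ) K)) →ₗ[K]
      ((MvPolynomial (Fin ℓ) K) [⋀^Fin p]→ₗ[K] (MvPolynomial (Fin ℓ) K)) where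
  toFun θ := θ.curryLeft (formPoly y)
  map_add' _ _ := rfl
  map_smul' _ _ := rfl

theorem contract_apply (y : Module.Dual K (Fin ℓ → K)) (p : ℕ)
    (θ : (MvPolynomial (Fin ℓ) K) [⋀^Fin (p + 1)]→ₗ[K] (MvPolynomial (Fin ℓ) K))
    (v : Fin p → MvPolynomial (Fin ℓ) K) :
    contract y p θ v = θ (Fin.cons (formPoly y) v) := rfl

/-- The constant derivation `∂_ξ` of the polynomial ring in the direction `ξ`. -/
def dirDer (ξ : Fin ℓ → K) :
    Derivation K (MvPolynomial (Fin ℓ) K) (MvPolynomial (Fin ℓ) K) :=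
  MvPolynomial.mkDerivation K fun i => MvPolynomial.C (ξ i)

theorem dirDer_formPoly (ξ : Fin ℓ → K) (φ : Module.Dual K (Fin ℓ → K)) :
    dirDer ξ (formPoly φ) = MvPolynomial.C (φ ξ) := by
  have hξ : φ ξ = ∑ i, ξ i * φ (Pi.single i 1) := by
    conv_lhs => rw [pi_eq_sum_univ' ξ]
    simp [map_sum]
  rw [hξ]
  simp [dirDer, formPoly, MvPolynomial.mkDerivation_X, mul_comm]

/-- The exterior product `∂_ξ ∧ θ`, that is
`(v₀, …, v_p) ↦ ∑ i, (-1)ⁱ ∂_ξ(vᵢ) θ(v₀, …, v̂ᵢ, …, v_p)`. -/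
def wedge (ξ : Fin ℓ → K) {p : ℕ}
    (θ : (MvPolynomial (Fin ℓ) K) [⋀^Fin p]→ₗ[K] (MvPolynomial (Fin ℓ) K)) :
    (MvPolynomial (Fin ℓ) K) [⋀^Fin (p + 1)]→ₗ[K] (MvPolynomial (Fin ℓ) K) :=
  AlternatingMap.alternatizeUncurryFin
    { toFun := fun f => dirDer ξ f • θ
      map_add' := fun f g => by rw [map_add, add_smul]
      map_smul' := fun c f => by
        ext v : 1
        simp }

theorem wedge_apply (ξ : Fin ℓ → K) {p : ℕ}
    (θ : (MvPolynomial (Fin ℓ) K) [⋀^Fin p]→ₗ[K] (MvPolynomial (Fin ℓ) K))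
    (v : Fin (p + 1) → MvPolynomial (Fin ℓ) K) :
    wedge ξ θ v =
      ∑ i : Fin (p + 1), (-1) ^ (i : ℕ) • (dirDer ξ (v i) * θ (i.removeNth v)) := by
  simp only [wedge, AlternatingMap.alternatizeUncurryFin_apply]
  rfl

theorem IsMultiDer.contract {p : ℕ} (y : Module.Dual K (Fin ℓ → K))
    {θ : (MvPolynomial (Fin ℓ) K) [⋀^Fin (p + 1)]→ₗ[K] (MvPolynomial (Fin ℓ) K)}
    (hθ : IsMultiDer θ) : IsMultiDer (contract y p θ) := by
  intro i v f g
  simp only [contract_apply, Fin.cons_update]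
  exact hθ i.succ _ f g

theorem IsMultiDer.wedge {p : ℕ} (ξ : Fin ℓ → K)
    {θ : (MvPolynomial (Fin ℓ) K) [⋀^Fin p]→ₗ[K] (MvPolynomial (Fin ℓ) K)}
    (hθ : IsMultiDer θ) : IsMultiDer (wedge ξ θ) := by
  intro i v f g
  simp only [wedge_apply, Finset.mul_sum, ← Finset.sum_add_distrib]
  refine Finset.sum_congr rfl fun j _ => ?_
  by_cases hji : i = j
  · subst hji
    simp only [Function.update_self, Fin.removeNth_update, Derivation.leibniz, smul_eq_mul,
      zsmul_eq_mul]
    ring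
  · obtain ⟨k, rfl⟩ := Fin.exists_succAbove_eq hji
    simp only [Fin.removeNth_update_succAbove, hθ k,
      Function.update_of_ne (Fin.succAbove_ne j k).symm,
      zsmul_eq_mul]
    ring

/-- Membership in `I` of the values of `θ` at tuples containing `φ` passes to `∂_ξ ∧ θ`
whenever `φ` vanishes at `ξ`. -/
theorem wedge_mem {p : ℕ} {ξ : Fin ℓ → K} {φ : Module.Dual K (Fin ℓ → K)} (hφ : φ ξ = 0)
    (I : Ideal (MvPolynomial (Fin ℓ) K))
    {θ : (MvPolynomial (Fin ℓ) K) [⋀^Fin p]→ₗ[K] (MvPolynomial (Fin ℓ) K)}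
    (hθ : ∀ (v : Fin p → MvPolynomial (Fin ℓ) K) (i : Fin p), v i = formPoly φ → θ v ∈ I)
    (v : Fin (p + 1) → MvPolynomial (Fin ℓ) K) (i : Fin (p + 1)) (hv : v i = formPoly φ) :
    wedge ξ θ v ∈ I := by
  rw [wedge_apply]
  refine sum_mem fun j _ => zsmul_mem ?_ _
  by_cases hji : i = j
  · subst hji
    simp [hv, dirDer_formPoly, hφ]
  · obtain ⟨k, rfl⟩ := Fin.exists_succAbove_eq hji
    exact Ideal.mul_mem_left _ _ (hθ _ k hv)

theorem contract_wedge {p : ℕ} {ξ : Fin ℓ → K} {y : Module.Dual K (Fin ℓ → K)} (hy : y ξ = 1)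
    {θ : (MvPolynomial (Fin ℓ) K) [⋀^Fin p]→ₗ[K] (MvPolynomial (Fin ℓ) K)}
    (hθ : ∀ (v : Fin p → MvPolynomial (Fin ℓ) K) (i : Fin p), v i = formPoly y → θ v = 0) :
    contract y p (wedge ξ θ) = θ := by
  ext v : 1
  rw [contract_apply, wedge_apply, Fin.sum_univ_succ, Finset.sum_eq_zero]
  · simp [dirDer_formPoly, hy, Fin.removeNth_zero]
  · intro i _
    -- After removing a later argument, `y` is still the first argument of `θ`.
    obtain ⟨n, rfl⟩ : ∃ n, p = n + 1 := ⟨p - 1, by have := i.pos; omega⟩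
    rw [hθ _ 0 (by simp [Fin.removeNth]), mul_zero, smul_zero]

/-! ### Multiderivations killed by a set of linear forms -/

/-- The elements of `Dᵖ(𝒜, m)_d` that vanish as soon as one of their arguments is a linear form
in `T`. -/
def killed (A : MultiArr K ℓ) (T : Set (Module.Dual K (Fin ℓ → K))) (p d : ℕ) :
    Submodule K ((MvPolynomial (Fin ℓ) K) [⋀^Fin p]→ₗ[K] (MvPolynomial (Fin ℓ) K)) where
  carrier := {θ | θ ∈ DpGraded A p d ∧ ∀ φ ∈ T, ∀ (v : Fin p → MvPolynomial (Fin ℓ) K)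
    (i : Fin p), v i = formPoly φ → θ v = 0}
  add_mem' := fun ha hb => ⟨add_mem ha.1 hb.1, fun φ hφ v i hv => by
    simp [ha.2 φ hφ v i hv, hb.2 φ hφ v i hv]⟩
  zero_mem' := ⟨zero_mem _, fun _ _ _ _ _ => rfl⟩
  smul_mem' := fun c θ hθ => ⟨Submodule.smul_mem _ c hθ.1, fun φ hφ v i hv => by
    simp [hθ.2 φ hφ v i hv]⟩

theorem killed_le (A : MultiArr K ℓ) (T : Set (Module.Dual K (Fin ℓ → K))) (p d : ℕ) :
    killed A T p d ≤ DpGraded A p d := fun _ h => h.1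

instance finiteDimensional_killed (A : MultiArr K ℓ) (T : Set (Module.Dual K (Fin ℓ → K)))
    (p d : ℕ) : FiniteDimensional K (killed A T p d) :=
  Submodule.finiteDimensional_of_le (killed_le A T p d)

theorem killed_empty (A : MultiArr K ℓ) (p d : ℕ) : killed A ∅ p d = DpGraded A p d :=
  le_antisymm (killed_le A ∅ p d) fun _ h => ⟨h, fun _ hφ => hφ.elim⟩

theorem killed_zero (A : MultiArr K ℓ) (T : Set (Module.Dual K (Fin ℓ → K))) (d : ℕ) :
    killed A T 0 d = DpGraded A 0 d :=
  le_antisymm (killed_le A T 0 d) fun _ h => ⟨h, fun _ _ _ i => i.elim0⟩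

theorem contract_mem_killed {A : MultiArr K ℓ} {T : Set (Module.Dual K (Fin ℓ → K))} {p d : ℕ}
    (y : Module.Dual K (Fin ℓ → K))
    {θ : (MvPolynomial (Fin ℓ) K) [⋀^Fin (p + 1)]→ₗ[K] (MvPolynomial (Fin ℓ) K)}
    (hθ : θ ∈ killed A T (p + 1) d) : contract y p θ ∈ killed A (insert y T) p d := by
  obtain ⟨⟨⟨hder, hA⟩, hhom⟩, hT⟩ := hθ
  refine ⟨⟨⟨hder.contract y, fun φ hφ v i hv => ?_⟩, fun v => ?_⟩, fun φ hφ v i hv => ?_⟩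
  · exact hA φ hφ _ i.succ (by simpa using hv)
  · rw [contract_apply, ← Fin.update_cons_zero 0, formPoly, θ.map_update_sum]
    refine MvPolynomial.IsHomogeneous.sum _ _ _ fun a _ => ?_
    rw [← MvPolynomial.smul_eq_C_mul, θ.map_update_smul, MvPolynomial.smul_eq_C_mul]
    have h1 := (MvPolynomial.isHomogeneous_C (Fin ℓ) (y (Pi.single a 1))).mul
      (hhom (Fin.cons a v))
    rw [zero_add] at h1
    convert h1 using 3
    rw [Fin.update_cons_zero]
    ext1 j
    refine Fin.cases ?_ (fun j => ?_) j <;> simp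
  · rcases hφ with rfl | hφ
    · exact θ.map_eq_zero_of_eq _ (i := 0) (j := i.succ) (by simp [hv]) (Fin.succ_ne_zero i).symm
    · exact hT φ hφ _ i.succ (by simpa using hv)

theorem wedge_mem_killed {A : MultiArr K ℓ} {T : Set (Module.Dual K (Fin ℓ → K))} {p d : ℕ}
    {ξ : Fin ℓ → K} (hA : ∀ φ ∈ A.duals, φ ξ = 0) (hT : ∀ φ ∈ T, φ ξ = 0)
    {θ : (MvPolynomial (Fin ℓ) K) [⋀^Fin p]→ₗ[K] (MvPolynomial (Fin ℓ) K)}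
    (hθ : θ ∈ killed A T p d) : wedge ξ θ ∈ killed A T (p + 1) d := by
  refine ⟨⟨⟨hθ.1.1.1.wedge ξ, fun φ hφ v i hv => ?_⟩, fun v => ?_⟩, fun φ hφ v i hv => ?_⟩
  · exact wedge_mem (hA φ hφ) _ (hθ.1.1.2 φ hφ) v i hv
  · rw [wedge_apply]
    refine MvPolynomial.IsHomogeneous.sum _ _ _ fun i _ => ?_
    refine zsmul_mem (K := homogeneousSubmodule (Fin ℓ) K d) ?_ _
    rw [mem_homogeneousSubmodule]
    rw [dirDer, MvPolynomial.mkDerivation_X]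
    have h1 := (MvPolynomial.isHomogeneous_C (Fin ℓ) (ξ (v i))).mul (hθ.1.2 (i.removeNth v))
    rw [zero_add] at h1
    exact h1
  · exact (Ideal.mem_bot).mp (wedge_mem (hT φ hφ) ⊥
      (fun v i hv => (Ideal.mem_bot).mpr (hθ.2 φ hφ v i hv)) v i hv)

/-- Rank-nullity for contraction with `y`, whose image is identified by means of `∂_ξ ∧ ·`. -/
theorem finrank_killed_succ {A : MultiArr K ℓ} {T : Set (Module.Dual K (Fin ℓ → K))}
    {ξ : Fin ℓ → K} (hA : ∀ φ ∈ A.duals, φ ξ = 0) (hT : ∀ φ ∈ T, φ ξ = 0)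
    {y : Module.Dual K (Fin ℓ → K)} (hy : y ξ = 1) (p d : ℕ) :
    Module.finrank K (killed A T (p + 1) d) =
      Module.finrank K (killed A (insert y T) (p + 1) d) +
        Module.finrank K (killed A (insert y T) p d) := by
  have hle : ∀ q, killed A (insert y T) q d ≤ killed A T q d := fun q θ hθ =>
    ⟨hθ.1, fun φ hφ => hθ.2 φ (Set.mem_insert_of_mem _ hφ)⟩
  have hrange : LinearMap.range ((contract y p).domRestrict (killed A T (p + 1) d)) =
      killed A (insert y T) p d := by
    apply le_antisymm
    · rintro _ ⟨θ, rfl⟩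
      exact contract_mem_killed y θ.2
    · intro θ hθ
      exact ⟨⟨wedge ξ θ, wedge_mem_killed hA hT (hle p hθ)⟩,
        contract_wedge hy (hθ.2 y (Set.mem_insert _ _))⟩
  have hker : LinearMap.ker ((contract y p).domRestrict (killed A T (p + 1) d)) =
      (killed A (insert y T) (p + 1) d).comap (killed A T (p + 1) d).subtype := by
    ext ⟨θ, hθ⟩
    constructor
    · intro h
      have h0 : contract y p θ = 0 := h
      refine ⟨hθ.1, fun φ hφ v i hv => ?_⟩
      rcases hφ with rfl | hφ
      · -- Alternation moves the argument `y` to the first slot.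
        rw [← Fin.insertNth_self_removeNth i v, AlternatingMap.map_insertNth, hv]
        have h1 : contract φ p θ (i.removeNth v) = 0 := by rw [h0]; rfl
        rw [contract_apply] at h1
        exact (congrArg _ h1).trans (smul_zero _)
      · exact hθ.2 φ hφ v i hv
    · intro h
      change contract y p θ = 0
      ext v : 1
      exact h.2 y (Set.mem_insert _ _) _ 0 rfl
  have hrn := LinearMap.finrank_range_add_finrank_ker (K := K) (V := killed A T (p + 1) d)
    (V₂ := (MvPolynomial (Fin ℓ) K) [⋀^Fin p]→ₗ[K] (MvPolynomial (Fin ℓ) K))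
    ((contract y p).domRestrict (killed A T (p + 1) d))
  rw [hrange, hker, (Submodule.comapSubtypeEquivOfLe (hle (p + 1))).finrank_eq, add_comm] at hrn
  exact hrn.symm

/-! ### Generating polynomials -/

/-- The Hilbert series of the multiderivations killed by `T`. -/
def hilbKilled (A : MultiArr K ℓ) (T : Set (Module.Dual K (Fin ℓ → K))) (p : ℕ) :
    PowerSeries ℤ :=
  PowerSeries.mk fun d => (Module.finrank K (killed A T p d) : ℤ)

theorem hilbKilled_eq_zero (A : MultiArr K ℓ) (T : Set (Module.Dual K (Fin ℓ → K))) {p : ℕ}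
    (hp : ℓ < p) : hilbKilled A T p = 0 := by
  ext d
  have h : killed A T p d = ⊥ := le_bot_iff.mp (DpGraded_eq_bot A hp d ▸ killed_le A T p d)
  simp [hilbKilled, h]

theorem hilbKilled_succ {A : MultiArr K ℓ} {T : Set (Module.Dual K (Fin ℓ → K))}
    {ξ : Fin ℓ → K} (hA : ∀ φ ∈ A.duals, φ ξ = 0) (hT : ∀ φ ∈ T, φ ξ = 0)
    {y : Module.Dual K (Fin ℓ → K)} (hy : y ξ = 1) (p : ℕ) :
    hilbKilled A T (p + 1) =
      hilbKilled A (insert y T) (p + 1) + hilbKilled A (insert y T) p := by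
  ext d
  simp [hilbKilled, finrank_killed_succ hA hT hy p d]

/-- The polynomial `∑ₚ H(p) Yᵖ`, where `H(p)` is the Hilbert series of the `p`-derivations killed
by `T`. -/
def genPoly (A : MultiArr K ℓ) (T : Set (Module.Dual K (Fin ℓ → K))) :
    Polynomial (PowerSeries ℤ) :=
  ∑ p ∈ Finset.range (ℓ + 1), Polynomial.C (hilbKilled A T p) * Polynomial.X ^ p

theorem coeff_genPoly (A : MultiArr K ℓ) (T : Set (Module.Dual K (Fin ℓ → K))) (p : ℕ) :
    (genPoly A T).coeff p = hilbKilled A T p := by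
  simp only [genPoly, Polynomial.finsetSum_coeff, Polynomial.coeff_C_mul_X_pow]
  rw [Finset.sum_ite_eq]
  split_ifs with h
  · rfl
  · exact (hilbKilled_eq_zero A T (by simpa [Nat.lt_succ_iff] using h)).symm

theorem genPoly_eq_mul {A : MultiArr K ℓ} {T : Set (Module.Dual K (Fin ℓ → K))}
    {ξ : Fin ℓ → K} (hA : ∀ φ ∈ A.duals, φ ξ = 0) (hT : ∀ φ ∈ T, φ ξ = 0)
    {y : Module.Dual K (Fin ℓ → K)} (hy : y ξ = 1) :
    genPoly A T = (1 + Polynomial.X) * genPoly A (insert y T) := by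
  ext1 p
  rw [add_mul, one_mul, Polynomial.coeff_add]
  cases p with
  | zero => 
    ext d
    simp only [Polynomial.mul_coeff_zero, Polynomial.coeff_X_zero, zero_mul, add_zero,
      coeff_genPoly, hilbKilled, PowerSeries.coeff_mk]
    rw [killed_zero, killed_zero]
  | succ p =>
    simp only [Polynomial.coeff_X_mul, coeff_genPoly]
    exact hilbKilled_succ hA hT hy p

theorem one_add_X_pow_dvd_genPoly (A : MultiArr K ℓ) (n : ℕ) :
    ∀ (T : Set (Module.Dual K (Fin ℓ → K))) (ξ : Fin n → Fin ℓ → K)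
      (y : Fin n → Module.Dual K (Fin ℓ → K)),
      (∀ i, ∀ φ ∈ A.duals, φ (ξ i) = 0) → (∀ i, ∀ φ ∈ T, φ (ξ i) = 0) →
      (∀ i j, y i (ξ j) = if i = j then 1 else 0) →
      (1 + Polynomial.X) ^ n ∣ genPoly A T := by
  induction n with
  | zero => intro T ξ y _ _ _; simp
  | succ n ih =>
    intro T ξ y hA hT hy
    rw [genPoly_eq_mul (hA 0) (hT 0) (y := y 0) (by simp [hy]), pow_succ']
    refine mul_dvd_mul_left _ (ih _ (fun i => ξ i.succ) (fun i => y i.succ)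
      (fun i => hA i.succ) (fun i φ hφ => ?_) (fun i j => by simp [hy]))
    rcases hφ with rfl | hφ
    · simp [hy, (Fin.succ_ne_zero i).symm]
    · exact hT i.succ φ hφ

theorem psi_eq_comp (A : MultiArr K ℓ) :
    psi A = (genPoly A ∅).comp
      (Polynomial.C ((PowerSeries.X : PowerSeries ℤ) - 1) * Polynomial.X - 1) := by
  have h : ∀ p, hilbKilled A ∅ p = hilb A p := fun p => by
    ext d
    simp only [hilbKilled, hilb, PowerSeries.coeff_mk]
    rw [killed_empty]
  simp only [psi, genPoly, h, Polynomial.sum_comp, Polynomial.mul_comp,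
    Polynomial.C_comp, Polynomial.X_pow_comp]

theorem X_pow_dvd_psi (A : MultiArr K ℓ) (X : Submodule K (Fin ℓ → K))
    (hX : ∀ φ ∈ A.duals, X ≤ LinearMap.ker φ) :
    Polynomial.X ^ Module.finrank K X ∣ psi A := by
  obtain ⟨g, hg⟩ := X.subtype.exists_leftInverse_of_injective X.ker_subtype
  let b := Module.finBasis K X
  have hgb : ∀ i, g (b i : Fin ℓ → K) = b i := fun i => LinearMap.congr_fun hg (b i)
  obtain ⟨G, hG⟩ := one_add_X_pow_dvd_genPoly A (Module.finrank K X) ∅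
    (fun i => (b i : Fin ℓ → K)) (fun i => b.coord i ∘ₗ g)
    (fun i φ hφ => hX φ hφ (b i).2) (fun _ _ hφ => hφ.elim)
    (fun i j => by simp [hgb, Finsupp.single_apply, eq_comm])
  rw [psi_eq_comp, hG, Polynomial.mul_comp, Polynomial.pow_comp]
  refine Dvd.dvd.mul_right (pow_dvd_pow_of_dvd ⟨Polynomial.C (PowerSeries.X - 1), ?_⟩ _) _
  simp [mul_comm]

theorem psiAtOne_eq_zero (A : MultiArr K ℓ) (X : Submodule K (Fin ℓ → K))
    (hX : ∀ φ ∈ A.duals, X ≤ LinearMap.ker φ) {k : ℕ} (hk : k < Module.finrank K X) :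
    psiAtOne A k = 0 := by
  have h0 : (psi A).coeff k = 0 := Polynomial.X_pow_dvd_iff.mp (X_pow_dvd_psi A X hX) k hk
  have hf : psiQCoeff A k = 0 := by
    unfold psiQCoeff
    split_ifs with h
    · refine Polynomial.coe_injective ℤ ?_
      simpa using h.choose_spec.trans h0
    · rfl
  simp [psiAtOne, hf]

/-- For every `X ∈ L(𝒜)` the characteristic polynomial
`χ((𝒜_X,m_X),t)` is divisible by `t^{dim X}`; equivalently `C_p(X) = 0` whenever
`ℓ − p < dim X`. -/
theorem charPoly_dvd_dim (A : MultiArr K ℓ) :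
    ∀ X ∈ LSet A,
      (Polynomial.X ^ (Module.finrank K X) ∣ charPoly (restrictArr A X)) ∧
      (∀ p : ℕ, p ≤ ℓ → ℓ - p < Module.finrank K X →
        CpCoeff (restrictArr A X) p = 0) := by
  intro X _
  have hX : ∀ φ ∈ (restrictArr A X).duals, X ≤ LinearMap.ker φ := fun φ hφ =>
    (Finset.mem_filter.mp hφ).2
  refine ⟨?_, fun p _ hp => ?_⟩
  · rw [charPoly, zsmul_eq_mul]
    refine Dvd.dvd.mul_left ?_ _
    refine Finset.dvd_sum fun k _ => ?_
    rcases lt_or_ge k (Module.finrank K X) with hk | hk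
    · simp [psiAtOne_eq_zero (restrictArr A X) X hX hk]
    · exact Dvd.dvd.mul_left (pow_dvd_pow _ hk) _
  · simp [CpCoeff, psiAtOne_eq_zero (restrictArr A X) X hX hp]
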